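/- arXiv:1809.02527 — 3 statements merged into one kernel-verified Lean document; each statement's English description precedes it below -/
import Mathlib

section
/- (Lipschitz property of the acceptance function) For all real numbers x and y, | min(1, exp(x)) − min(1, exp(y)) | ≤ min(1, |x − y|). -/
/-!
Since `exp` is increasing, `min 1 (exp x) = exp (min 0 x)`: the acceptance function is the
`1`-Lipschitz map `min 0` followed by `exp`, which is `1`-Lipschitz on `(-∞, 0]`.
The bound by `1` holds because all values lie in `[0, 1]`.
-/

theorem exp_sub_exp_le_exp_mul_sub (x y : ℝ) :
    Real.exp x - Real.exp y ≤ Real.exp x * (x - y) := by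
  have tangent : y - x + 1 ≤ Real.exp (y - x) := Real.add_one_le_exp (y - x)
  calc Real.exp x - Real.exp y
      = Real.exp x * (1 - Real.exp (y - x)) := by
        rw [mul_sub, mul_one, ← Real.exp_add, add_sub_cancel]
    _ ≤ Real.exp x * (x - y) := by
        gcongr Real.exp x * ?_
        linarith

theorem abs_exp_sub_exp_le_exp_max_mul_abs_sub (x y : ℝ) :
    |Real.exp x - Real.exp y| ≤ Real.exp (max x y) * |x - y| := by
  wlog hyx : y ≤ x generalizing x y
  · rw [abs_sub_comm, max_comm, abs_sub_comm x]
    exact this y x (le_of_not_ge hyx)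
  rw [max_eq_left hyx, abs_of_nonneg (sub_nonneg.2 hyx),
    abs_of_nonneg (sub_nonneg.2 (Real.exp_le_exp.2 hyx))]
  exact exp_sub_exp_le_exp_mul_sub x y

theorem abs_min_exp_sub_min_exp_le_exp_mul_abs_sub (a x y : ℝ) :
    |min (Real.exp a) (Real.exp x) - min (Real.exp a) (Real.exp y)| ≤ Real.exp a * |x - y| := by
  have min_lipschitz : |min a x - min a y| ≤ |x - y| := by
    simpa using abs_min_sub_min_le_max a x a y
  calc |min (Real.exp a) (Real.exp x) - min (Real.exp a) (Real.exp y)|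
      = |Real.exp (min a x) - Real.exp (min a y)| := by
        simp only [Real.exp_monotone.map_min]
    _ ≤ Real.exp (max (min a x) (min a y)) * |min a x - min a y| :=
        abs_exp_sub_exp_le_exp_max_mul_abs_sub _ _
    _ ≤ Real.exp a * |x - y| := by
        gcongr
        exact max_le (min_le_left a x) (min_le_left a y)

/-- (Lipschitz property of the acceptance function)
For all real numbers `x` and `y`,
`|min 1 (exp x) − min 1 (exp y)| ≤ min 1 |x − y|`. -/
theorem stmt_11 (x y : ℝ) :
    |min 1 (Real.exp x) - min 1 (Real.exp y)| ≤ min 1 |x - y| := by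
  have mem_unit (t : ℝ) : min 1 (Real.exp t) ∈ Set.Icc 0 1 :=
    ⟨le_min zero_le_one (Real.exp_nonneg t), min_le_left _ _⟩
  refine le_min ?_ ?_
  · exact Real.dist_le_of_mem_Icc_01 (mem_unit x) (mem_unit y)
  · simpa only [Real.exp_zero, one_mul] using abs_min_exp_sub_min_exp_le_exp_mul_abs_sub 0 x y
end

section
/- (Lemma C.2, identity for the expected acceptance probability) Let Z be a real-valued random variable on a probability space with cumulative distribution function F. Then for any a ∈ ℝ, E[ min(1, exp(a + Z)) ] = 1 − ∫_{−∞}^0 F(u − a) · exp(u) du. -/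
open MeasureTheory

/-!
If `U` is uniform on `(0, 1)` and independent of `Z`, then `min 1 (exp (a + Z))` is the conditional
probability given `Z` of the acceptance event `log U < a + Z`. Conditioning on `U` instead, the
rejection event `a + Z ≤ log U` has conditional probability `F (log U - a)`, and `log U` has density
`exp` on `(-∞, 0]`.
-/

open Real Set

section Product

variable {α β : Type*} [MeasurableSpace α] [MeasurableSpace β] {s : Set (α × β)}

lemma measureReal_prod_eq_integral (μ : Measure α) (ν : Measure β) [IsFiniteMeasure ν]
    (hs : MeasurableSet s) : (μ.prod ν).real s = ∫ x, ν.real (Prod.mk x ⁻¹' s) ∂μ := by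
  rw [measureReal_def, Measure.prod_apply hs]
  exact (integral_toReal (measurable_measure_prodMk_left hs).aemeasurable
    (ae_of_all _ fun _ => measure_lt_top _ _)).symm

lemma measureReal_prod_eq_integral_symm (μ : Measure α) (ν : Measure β) [IsFiniteMeasure μ]
    [SFinite ν] (hs : MeasurableSet s) :
    (μ.prod ν).real s = ∫ y, μ.real ((fun x => (x, y)) ⁻¹' s) ∂ν := by
  rw [measureReal_def, Measure.prod_apply_symm hs]
  exact (integral_toReal (measurable_measure_prodMk_right hs).aemeasurable
    (ae_of_all _ fun _ => measure_lt_top _ _)).symm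

end Product

/-- Both integrals are product measures of complementary sets, the strict and the weak side of
the diagonal. -/
lemma integral_measureReal_Iio_add_integral_measureReal_Iic {α : Type*} [LinearOrder α]
    [TopologicalSpace α] [OrderClosedTopology α] [SecondCountableTopology α] [MeasurableSpace α]
    [OpensMeasurableSpace α] (μ ν : Measure α) [IsFiniteMeasure μ] [IsFiniteMeasure ν] :
    ∫ x, ν.real (Iio x) ∂μ + ∫ y, μ.real (Iic y) ∂ν = μ.real univ * ν.real univ := by
  have hlt : MeasurableSet {p : α × α | p.2 < p.1} := measurableSet_lt measurable_snd measurable_fst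
  have hIio : (μ.prod ν).real {p | p.2 < p.1} = ∫ x, ν.real (Iio x) ∂μ :=
    measureReal_prod_eq_integral μ ν hlt
  have hcompl : {p : α × α | p.2 < p.1}ᶜ = {p | p.1 ≤ p.2} := by
    ext; simp
  have hIic : (μ.prod ν).real {p | p.2 < p.1}ᶜ = ∫ y, μ.real (Iic y) ∂ν := by
    rw [measureReal_prod_eq_integral_symm μ ν hlt.compl, hcompl]
    rfl
  rw [← hIio, ← hIic, measureReal_add_measureReal_compl hlt, ← univ_prod_univ,
    measureReal_prod_prod]

/-- The law of `log U` for `U` uniform on `(0, 1)`, given by its density `exp` on `(-∞, 0]`. It is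
the threshold below which a log acceptance ratio leads to rejection. -/
noncomputable def logUniform : Measure ℝ :=
  (volume.restrict (Iic 0)).withDensity fun u => ENNReal.ofReal (exp u)

namespace logUniform

instance : NullSingletonClass logUniform := by
  unfold logUniform
  infer_instance

lemma integral_eq_setIntegral (f : ℝ → ℝ) :
    ∫ u, f u ∂logUniform = ∫ u in Iic 0, f u * exp u := by
  rw [logUniform, integral_withDensity_eq_integral_toReal_smul (by fun_prop)
    (ae_of_all _ fun _ => ENNReal.ofReal_lt_top)]
  simp only [ENNReal.toReal_ofReal (exp_nonneg _), smul_eq_mul, mul_comm]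

instance : IsProbabilityMeasure logUniform := by
  have hmass : ∫ _, (1 : ℝ) ∂logUniform = 1 := by
    simp only [integral_eq_setIntegral, one_mul, integral_exp_Iic_zero]
  rw [isProbabilityMeasure_iff_real, ← hmass, integral_const, smul_eq_mul, mul_one]

lemma measureReal_Iic (c : ℝ) : logUniform.real (Iic c) = min 1 (exp c) :=
  calc logUniform.real (Iic c)
    _ = ∫ u in Iic (min c 0), exp u := by
      rw [measureReal_def, logUniform, withDensity_apply _ measurableSet_Iic,
        Measure.restrict_restrict measurableSet_Iic, Iic_inter_Iic,
        ← integral_eq_lintegral_of_nonneg_ae (ae_of_all _ exp_nonneg) (by fun_prop)]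
    _ = min 1 (exp c) := by
      rw [integral_exp_Iic, exp_monotone.map_min, exp_zero, min_comm]

lemma measureReal_Iio (c : ℝ) : logUniform.real (Iio c) = min 1 (exp c) := by
  rw [measureReal_congr Iio_ae_eq_Iic, measureReal_Iic]

end logUniform

lemma integral_min_one_exp (μ : Measure ℝ) [IsFiniteMeasure μ] :
    ∫ x, min 1 (exp x) ∂μ = μ.real univ - ∫ u in Iic 0, μ.real (Iic u) * exp u := by
  have h := integral_measureReal_Iio_add_integral_measureReal_Iic μ logUniform
  simp only [logUniform.measureReal_Iio, logUniform.integral_eq_setIntegral, probReal_univ,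
    mul_one] at h
  exact eq_sub_of_add_eq h

/-- (Lemma C.2, identity for the expected acceptance probability)
Let `Z` be a real-valued random variable on a probability space with cumulative
distribution function `F`.  Then for every `a ∈ ℝ`,
`E[min(1, exp (a + Z))] = 1 − ∫_{(−∞,0]} F (u − a) · exp u du`. -/
theorem stmt_13
    {Ω : Type*} [MeasurableSpace Ω] (μ : Measure Ω) [IsProbabilityMeasure μ]
    (Z : Ω → ℝ) (hZ : Measurable Z)
    (F : ℝ → ℝ) (hF : ∀ z, F z = (μ {ω | Z ω ≤ z}).toReal)
    (a : ℝ) :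
    ∫ ω, min 1 (Real.exp (a + Z ω)) ∂μ
      = 1 - ∫ u in Set.Iic (0 : ℝ), F (u - a) * Real.exp u := by
  have hX : Measurable fun ω => a + Z ω := hZ.const_add a
  have : IsProbabilityMeasure (μ.map fun ω => a + Z ω) :=
    Measure.isProbabilityMeasure_map hX.aemeasurable
  have hcdf (u : ℝ) : (μ.map fun ω => a + Z ω).real (Iic u) = F (u - a) := by
    simp only [map_measureReal_apply hX measurableSet_Iic, hF, le_sub_iff_add_le']
    rfl
  have hlaw := integral_min_one_exp (μ.map fun ω => a + Z ω)
  rw [integral_map hX.aemeasurable (by fun_prop), probReal_univ] at hlaw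
  simpa only [hcdf] using hlaw
end

section
/- (Unbiasedness of the annealed importance sampling estimator) Let (E, ℰ) be a measurable space and let γ_0, γ_1, …, γ_{K+1} be measurable nonnegative functions on E with 0 < Z_k := ∫ γ_k dλ < ∞ for a σ-finite reference measure λ, and set π_k := γ_k/Z_k, probability densities with respect to λ. Assume that for every k = 0,…,K and every measurable set A, π_{k+1}(A) > 0 implies π_k(A) > 0 (so each ratio γ_{k+1}/γ_k is π_k-a.e. well defined). Let R_1, …, R_K be Markov kernels on E such that R_k leaves the probability measure with density π_k invariant. Let (U_0, …, U_K) be the inhomogeneous Markov chain with U_0 distributed with density π_0 and U_k | U_{k−1} ~ R_k(U_{k−1}, ·) for k = 1,…,K. Then E[ ∏_{k=0}^K γ_{k+1}(U_k) / γ_k(U_k) ] = Z_{K+1} / Z_0; equivalently, E[ ∏_{k=0}^K π_{k+1}(U_k) / π_k(U_k) ] = 1. -/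
/-!
Reweight the chain by incremental weights `w k (U_k)`. If `μ k` is the unnormalized law of `U_k`
after the weights `w 0, …, w (k - 1)`, then `μ (k + 1)` arises from `μ k` by multiplying by the
density `w k` and moving with `R (k + 1)`. For `w k = π_{k+1} / π_k` this flow is `π` itself:
absolute continuity makes `w k` a density of `π_{k+1}` with respect to `π_k`, and `R (k + 1)`
preserves `π_{k+1}`. So the normalized estimator has expectation the total mass of `π_{K+1}`,
and the unnormalized one differs from it by the telescoping factor `∏ Z_{k+1} / Z_k`.
-/

open MeasureTheory ProbabilityTheory

/-- The law of the inhomogeneous Markov chain `(U_0, …, U_n)` with initial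
distribution `π0` and `U_k | U_{k−1} ~ R_k (U_{k−1}, ·)` for `1 ≤ k ≤ n`. -/
noncomputable def chainLaw {E : Type*} [MeasurableSpace E]
    (π0 : Measure E) (R : ℕ → Kernel E E) :
    (n : ℕ) → Measure (Fin (n + 1) → E)
  | 0 => π0.map (fun x => fun _ => x)
  | n + 1 => (chainLaw π0 R n).bind
      (fun u => ((R (n + 1)) (u (Fin.last n))).map (Fin.snoc u))

open scoped ENNReal

section Telescoping

variable {G : Type*} [CommGroupWithZero G]

lemma prod_univ_div_telescope {n : ℕ} {z : ℕ → G} (hz : ∀ k ≤ n, z k ≠ 0) :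
    ∏ k : Fin n, z (k + 1) / z k = z n / z 0 := by
  rw [Fin.prod_univ_eq_prod_range (fun k => z (k + 1) / z k)]
  refine Finset.prod_range_induction _ (fun k => z k / z 0) (div_self (hz 0 n.zero_le)) n
    fun k hk => ?_
  rw [mul_comm, div_mul_div_cancel₀ (hz k hk.le)]

lemma prod_univ_div_eq_mul_prod_div_div {n : ℕ} {z : ℕ → G} (hz : ∀ k ≤ n, z k ≠ 0)
    (a b : Fin n → G) :
    ∏ k, a k / b k = z n / z 0 * ∏ k : Fin n, (a k / z (k + 1)) / (b k / z k) := by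
  rw [← prod_univ_div_telescope hz, ← Finset.prod_mul_distrib]
  refine Finset.prod_congr rfl fun k _ => ?_
  have hzk := hz k k.isLt.le
  have hzk' := hz (k + 1) k.isLt
  field_simp

end Telescoping

section Measurability

variable {α β γ : Type*} [MeasurableSpace α] [MeasurableSpace β] [MeasurableSpace γ]

lemma measurable_finSnoc (n : ℕ) :
    Measurable fun p : (Fin n → α) × α => (Fin.snoc p.1 p.2 : Fin (n + 1) → α) := by
  refine measurable_pi_lambda _ (Fin.lastCases ?_ fun i => ?_)
  · simpa only [Fin.snoc_last] using measurable_snd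
  · simpa only [Fin.snoc_castSucc, Function.comp_def] using
      (measurable_pi_apply i).comp measurable_fst

lemma measurable_kernel_map_uncurry (κ : Kernel α β) [IsSFiniteKernel κ] {f : α → β → γ}
    (hf : Measurable (Function.uncurry f)) : Measurable fun a => (κ a).map (f a) := by
  have map_eq (a : α) : (κ a).map (f a) = (Kernel.id ×ₖ κ).map (Function.uncurry f) a := by
    rw [Kernel.map_apply _ hf, Kernel.prod_apply, Kernel.id_apply, Measure.dirac_prod,
      Measure.map_map hf measurable_prodMk_left]
    rfl
  simp_rw [map_eq]
  exact Kernel.measurable _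

end Measurability

section WithDensity

variable {E : Type*} [MeasurableSpace E] {lam : Measure E}

/-- The junk value `q x / 0 = 0` is harmless: absolute continuity forces `q ≤ 0` almost everywhere
on `{p ≤ 0}`. -/
lemma withDensity_withDensity_ofReal_div {p q : E → ℝ} (hp : AEMeasurable p lam)
    (hq : AEMeasurable q lam)
    (hqp : lam.withDensity (fun x => ENNReal.ofReal (q x)) ≪
      lam.withDensity fun x => ENNReal.ofReal (p x)) :
    (lam.withDensity fun x => ENNReal.ofReal (p x)).withDensity
        (fun x => ENNReal.ofReal (q x / p x)) =
      lam.withDensity fun x => ENNReal.ofReal (q x) := by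
  have p_ne_zero : ∀ᵐ x ∂lam.withDensity fun x => ENNReal.ofReal (p x),
      ENNReal.ofReal (p x) ≠ 0 :=
    (ae_withDensity_iff' hp.ennreal_ofReal).2 (.of_forall fun _ => id)
  have p_ne_zero_of_q_ne_zero : ∀ᵐ x ∂lam, ENNReal.ofReal (q x) ≠ 0 → ENNReal.ofReal (p x) ≠ 0 :=
    (ae_withDensity_iff' hq.ennreal_ofReal).1 (hqp.ae_le p_ne_zero)
  have hqp_meas : AEMeasurable (fun x => ENNReal.ofReal (q x / p x)) lam :=
    (hq.div hp).ennreal_ofReal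
  rw [← withDensity_mul₀ hp.ennreal_ofReal hqp_meas]
  refine withDensity_congr_ae ?_
  filter_upwards [p_ne_zero_of_q_ne_zero] with x hx
  rw [Pi.mul_apply]
  rcases le_or_gt (p x) 0 with hpx | hpx
  · have p_eq_zero := ENNReal.ofReal_of_nonpos hpx
    rw [p_eq_zero, zero_mul, not_imp_not.1 hx p_eq_zero]
  · rw [← ENNReal.ofReal_mul hpx.le, mul_div_cancel₀ _ hpx.ne']

end WithDensity

section ChainLaw

variable {E : Type*} [MeasurableSpace E] {R : ℕ → Kernel E E} {n : ℕ}

lemma lintegral_chainLaw_zero (π0 : Measure E) {g : (Fin 1 → E) → ℝ≥0∞}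
    (hg : Measurable g) : ∫⁻ u, g u ∂chainLaw π0 R 0 = ∫⁻ x, g (fun _ => x) ∂π0 := by
  rw [chainLaw, lintegral_map hg (by fun_prop)]

lemma lintegral_chainLaw_succ (π0 : Measure E) [IsSFiniteKernel (R (n + 1))]
    {g : (Fin (n + 2) → E) → ℝ≥0∞} (hg : Measurable g) :
    ∫⁻ v, g v ∂chainLaw π0 R (n + 1) =
      ∫⁻ u, ∫⁻ x, g (Fin.snoc u x) ∂(R (n + 1) (u (Fin.last n))) ∂chainLaw π0 R n := by
  have step_measurable : Measurable fun u : Fin (n + 1) → E =>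
      (R (n + 1) (u (Fin.last n))).map (Fin.snoc (α := fun _ => E) u) :=
    measurable_kernel_map_uncurry
      ((R (n + 1)).comap (fun u : Fin (n + 1) → E => u (Fin.last n)) (measurable_pi_apply _))
      (measurable_finSnoc (n + 1))
  rw [chainLaw, Measure.lintegral_bind step_measurable.aemeasurable hg.aemeasurable]
  exact lintegral_congr fun u =>
    lintegral_map hg ((measurable_finSnoc (n + 1)).comp measurable_prodMk_left)

lemma measurable_prod_mul_last {w : ℕ → E → ℝ≥0∞} {f : E → ℝ≥0∞}
    (hw : ∀ k ≤ n, Measurable (w k)) (hf : Measurable f) :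
    Measurable fun u : Fin (n + 1) → E =>
      (∏ k : Fin (n + 1), w k (u k)) * f (u (Fin.last n)) :=
  (Finset.measurable_prod _ fun (k : Fin (n + 1)) _ =>
    (hw k k.is_le).comp (measurable_pi_apply k)).mul (hf.comp (measurable_pi_apply _))

/-- The Feynman-Kac formula. The test function `f` is what makes the induction close: integrating
out the last state replaces `f` by `x ↦ ∫ w (n + 1) · f dR (n + 1) x`. -/
theorem lintegral_prod_mul_last_chainLaw {μ : ℕ → Measure E} {w : ℕ → E → ℝ≥0∞}
    (hw : ∀ k ≤ n, Measurable (w k)) (hR : ∀ k < n, IsSFiniteKernel (R (k + 1)))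
    (hμ : ∀ k < n, ((μ k).withDensity (w k)).bind (R (k + 1)) = μ (k + 1))
    {f : E → ℝ≥0∞} (hf : Measurable f) :
    ∫⁻ u, (∏ k : Fin (n + 1), w k (u k)) * f (u (Fin.last n)) ∂chainLaw (μ 0) R n =
      ∫⁻ x, f x ∂(μ n).withDensity (w n) := by
  induction n generalizing f with
  | zero =>
    rw [lintegral_chainLaw_zero _ (measurable_prod_mul_last hw hf),
      lintegral_withDensity_eq_lintegral_mul _ (hw 0 le_rfl) hf]
    simp
  | succ n ih =>
    have := hR n n.lt_succ_self
    have hwf : Measurable fun x => w (n + 1) x * f x := (hw (n + 1) le_rfl).mul hf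
    calc
      _ = ∫⁻ u, (∏ k : Fin (n + 1), w k (u k)) *
            ∫⁻ x, w (n + 1) x * f x ∂(R (n + 1) (u (Fin.last n))) ∂chainLaw (μ 0) R n := by
        rw [lintegral_chainLaw_succ _ (measurable_prod_mul_last hw hf)]
        refine lintegral_congr fun u => ?_
        rw [← lintegral_const_mul _ hwf]
        simp only [Fin.prod_univ_castSucc, Fin.snoc_castSucc, Fin.snoc_last, Fin.val_castSucc,
          Fin.val_last, mul_assoc]
      _ = ∫⁻ y, ∫⁻ x, w (n + 1) x * f x ∂(R (n + 1) y) ∂(μ n).withDensity (w n) :=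
        ih (fun k hk => hw k (hk.trans n.le_succ)) (fun k hk => hR k (hk.trans n.lt_succ_self))
          (fun k hk => hμ k (hk.trans n.lt_succ_self)) hwf.lintegral_kernel
      _ = ∫⁻ x, w (n + 1) x * f x ∂μ (n + 1) := by
        rw [← Measure.lintegral_bind (R (n + 1)).aemeasurable hwf.aemeasurable,
          hμ n n.lt_succ_self]
      _ = _ := (lintegral_withDensity_eq_lintegral_mul _ (hw (n + 1) le_rfl) hf).symm

theorem lintegral_prod_chainLaw_of_invariant {π : ℕ → Measure E} {w : ℕ → E → ℝ≥0∞}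
    (hw : ∀ k ≤ n, Measurable (w k)) (hπ : ∀ k ≤ n, (π k).withDensity (w k) = π (k + 1))
    (hR : ∀ k < n, IsSFiniteKernel (R (k + 1)))
    (hinv : ∀ k < n, (R (k + 1)).Invariant (π (k + 1))) :
    ∫⁻ u, ∏ k : Fin (n + 1), w k (u k) ∂chainLaw (π 0) R n = π (n + 1) Set.univ := by
  have hflow : ∀ k < n, ((π k).withDensity (w k)).bind (R (k + 1)) = π (k + 1) := fun k hk =>
    (hπ k hk.le).symm ▸ hinv k hk
  simpa only [mul_one, lintegral_one, hπ n le_rfl] using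
    lintegral_prod_mul_last_chainLaw hw hR hflow (measurable_const (a := (1 : ℝ≥0∞)))

theorem integral_prod_div_chainLaw {lam : Measure E} {p : ℕ → E → ℝ} {π : ℕ → Measure E}
    (hp : ∀ k ≤ n + 1, Measurable (p k)) (hp0 : ∀ k ≤ n + 1, ∀ x, 0 ≤ p k x)
    (hπ : ∀ k ≤ n + 1, π k = lam.withDensity fun x => ENNReal.ofReal (p k x))
    (hac : ∀ k ≤ n, π (k + 1) ≪ π k) (hR : ∀ k < n, IsSFiniteKernel (R (k + 1)))
    (hinv : ∀ k < n, (R (k + 1)).Invariant (π (k + 1))) :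
    ∫ u, ∏ k : Fin (n + 1), p (k + 1) (u k) / p k (u k) ∂chainLaw (π 0) R n =
      ∫ x, p (n + 1) x ∂lam := by
  have hratio (k : ℕ) (hk : k ≤ n) : Measurable fun x => p (k + 1) x / p k x :=
    (hp (k + 1) (by lia)).div (hp k (by lia))
  have hratio0 (k : Fin (n + 1)) (x : E) : 0 ≤ p (k + 1) x / p k x :=
    div_nonneg (hp0 (k + 1) (by lia) x) (hp0 k (by lia) x)
  have hprod : Measurable fun u : Fin (n + 1) → E =>
      ∏ k : Fin (n + 1), p (k + 1) (u k) / p k (u k) :=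
    Finset.measurable_prod _ fun k _ => (hratio k k.is_le).comp (measurable_pi_apply k)
  have hdensity (k : ℕ) (hk : k ≤ n) :
      (π k).withDensity (fun x => ENNReal.ofReal (p (k + 1) x / p k x)) = π (k + 1) := by
    have hac := hac k hk
    rw [hπ k (by lia), hπ (k + 1) (by lia)] at hac ⊢
    exact withDensity_withDensity_ofReal_div (hp k (by lia)).aemeasurable
      (hp (k + 1) (by lia)).aemeasurable hac
  rw [integral_eq_lintegral_of_nonneg_ae
      (.of_forall fun u => Finset.prod_nonneg fun k _ => hratio0 k (u k))
      hprod.aestronglyMeasurable,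
    integral_eq_lintegral_of_nonneg_ae (.of_forall (hp0 (n + 1) le_rfl))
      (hp (n + 1) le_rfl).aestronglyMeasurable]
  simp_rw [ENNReal.ofReal_prod_of_nonneg fun k _ => hratio0 k _]
  rw [lintegral_prod_chainLaw_of_invariant (w := fun k x => ENNReal.ofReal (p (k + 1) x / p k x))
    (fun k hk => (hratio k hk).ennreal_ofReal) hdensity hR hinv, hπ (n + 1) le_rfl,
    withDensity_apply _ .univ, setLIntegral_univ]

end ChainLaw

theorem stmt_18_general
    {E : Type*} [MeasurableSpace E] (lam : Measure E) (K : ℕ) (γ : ℕ → E → ℝ)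
    (hγmeas : ∀ k ≤ K + 1, Measurable (γ k))
    (hγnonneg : ∀ k ≤ K + 1, ∀ x, 0 ≤ γ k x)
    (Z : ℕ → ℝ) (hZ : ∀ k ≤ K + 1, Z k = ∫ x, γ k x ∂lam)
    (hZpos : ∀ k ≤ K + 1, 0 < Z k)
    (πm : ℕ → Measure E)
    (hπm : ∀ k ≤ K + 1, πm k = lam.withDensity (fun x => ENNReal.ofReal (γ k x / Z k)))
    (habs : ∀ k ≤ K, ∀ A : Set E, MeasurableSet A → 0 < πm (k + 1) A → 0 < πm k A)
    (R : ℕ → Kernel E E) (hR : ∀ k, 1 ≤ k → k ≤ K → IsSFiniteKernel (R k))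
    (hinv : ∀ k, 1 ≤ k → k ≤ K → (πm k).bind (R k) = πm k) :
    (∫ u, ∏ k : Fin (K + 1), γ ((k : ℕ) + 1) (u k) / γ (k : ℕ) (u k)
        ∂(chainLaw (πm 0) R K)) = Z (K + 1) / Z 0
    ∧ (∫ u, ∏ k : Fin (K + 1),
          (γ ((k : ℕ) + 1) (u k) / Z ((k : ℕ) + 1)) / (γ (k : ℕ) (u k) / Z (k : ℕ))
        ∂(chainLaw (πm 0) R K)) = 1 := by
  have hac : ∀ k ≤ K, πm (k + 1) ≪ πm k := fun k hk =>
    .mk fun A hA => by simpa only [pos_iff_ne_zero, not_imp_not] using habs k hk A hA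
  have normalized : (∫ u, ∏ k : Fin (K + 1),
      (γ (k + 1) (u k) / Z (k + 1)) / (γ k (u k) / Z k) ∂chainLaw (πm 0) R K) = 1 := by
    rw [integral_prod_div_chainLaw (p := fun k x => γ k x / Z k)
        (fun k hk => (hγmeas k hk).div_const _)
        (fun k hk x => div_nonneg (hγnonneg k hk x) (hZpos k hk).le) hπm hac
        (fun k hk => hR (k + 1) k.succ_pos hk) (fun k hk => hinv (k + 1) k.succ_pos hk),
      integral_div, ← hZ _ le_rfl, div_self (hZpos _ le_rfl).ne']
  refine ⟨?_, normalized⟩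
  have rescaled (u : Fin (K + 1) → E) :=
    prod_univ_div_eq_mul_prod_div_div (fun k hk => (hZpos k hk).ne')
      (fun k : Fin (K + 1) => γ (k + 1) (u k)) (fun k => γ k (u k))
  rw [integral_congr_ae (.of_forall rescaled), integral_const_mul, normalized, mul_one]

/-- (Unbiasedness of the annealed importance sampling estimator)
Let `γ_0, …, γ_{K+1}` be measurable nonnegative functions on `E` with
`0 < Z_k := ∫ γ_k dλ < ∞` for a σ-finite measure `λ`, and `π_k := γ_k / Z_k`.
Assume `π_{k+1} ≪ π_k` in the sense that `π_{k+1}(A) > 0 ⟹ π_k(A) > 0`, and let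
`R_1, …, R_K` be Markov kernels with `R_k` leaving `π_k` invariant.  If
`(U_0, …, U_K)` is the chain started from `π_0` with transitions `R_k`, then
`E[∏_{k=0}^K γ_{k+1}(U_k)/γ_k(U_k)] = Z_{K+1}/Z_0`, equivalently
`E[∏_{k=0}^K π_{k+1}(U_k)/π_k(U_k)] = 1`. -/
theorem stmt_18
    {E : Type*} [MeasurableSpace E]
    (lam : Measure E) [SigmaFinite lam]
    (K : ℕ) (γ : ℕ → E → ℝ)
    (hγmeas : ∀ k ≤ K + 1, Measurable (γ k))
    (hγnonneg : ∀ k ≤ K + 1, ∀ x, 0 ≤ γ k x)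
    (hγint : ∀ k ≤ K + 1, Integrable (γ k) lam)
    (Z : ℕ → ℝ) (hZ : ∀ k ≤ K + 1, Z k = ∫ x, γ k x ∂lam)
    (hZpos : ∀ k ≤ K + 1, 0 < Z k)
    (πm : ℕ → Measure E)
    (hπm : ∀ k ≤ K + 1, πm k = lam.withDensity (fun x => ENNReal.ofReal (γ k x / Z k)))
    (habs : ∀ k ≤ K, ∀ A : Set E, MeasurableSet A → 0 < πm (k + 1) A → 0 < πm k A)
    (R : ℕ → Kernel E E) (hR : ∀ k, 1 ≤ k → k ≤ K → IsMarkovKernel (R k))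
    (hinv : ∀ k, 1 ≤ k → k ≤ K → (πm k).bind (R k) = πm k) :
    (∫ u, ∏ k : Fin (K + 1), γ ((k : ℕ) + 1) (u k) / γ (k : ℕ) (u k)
        ∂(chainLaw (πm 0) R K)) = Z (K + 1) / Z 0
    ∧ (∫ u, ∏ k : Fin (K + 1),
          (γ ((k : ℕ) + 1) (u k) / Z ((k : ℕ) + 1)) / (γ (k : ℕ) (u k) / Z (k : ℕ))
        ∂(chainLaw (πm 0) R K)) = 1 := by
  exact stmt_18_general lam K γ hγmeas hγnonneg Z hZ hZpos πm hπm habs R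
    (fun k hk hkK => have := hR k hk hkK; inferInstance) hinv
end
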